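/- For every real T ≥ 2 and every positive integer k, Σ_{0<γ≤T} n(γ,k)^{2k} ≤ (log T)/(2π) · ∫_0^T n(t, k+1)^{2k+1} dt, where the sum is over ordinates of nontrivial zeros of ζ in (0,T] counted with multiplicity. This inequality holds unconditionally. -/

import Mathlib

open Filter MeasureTheory
open scoped Real

noncomputable section

/-- The multiplicity (order of vanishing) of the Riemann zeta function at a point `z`:
the least `n` such that the `n`-th derivative of `ζ` at `z` is nonzero. -/
def zetaMult (z : ℂ) : ℕ := sInf {n : ℕ | iteratedDeriv n riemannZeta z ≠ 0}

/-- The set of nontrivial zeros of `ζ` (zeros with real part in `(0,1)`) with ordinate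
(imaginary part) in `(0, T]`. -/
def ntZeros (T : ℝ) : Set ℂ :=
  {ρ : ℂ | riemannZeta ρ = 0 ∧ 0 < ρ.re ∧ ρ.re < 1 ∧ 0 < ρ.im ∧ ρ.im ≤ T}

/-- `N(T)`: the number of nontrivial zeros with ordinate in `(0, T]`, counted with
multiplicity. -/
def zetaN (T : ℝ) : ℕ := ∑ᶠ ρ ∈ ntZeros T, zetaMult ρ

/-- `n(t, λ) = N(t + 2πλ/log T) - N(t)`. -/
def nShort (T t lam : ℝ) : ℕ := zetaN (t + 2 * π * lam / Real.log T) - zetaN t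


lemma aux_hd (a : ℂ) {x : ℝ} (hx : 0 < x) :
    HasDerivAt (fun y : ℝ => (y : ℂ) ^ a) (a * (x : ℂ) ^ (a - 1)) x := by
  have h : HasDerivAt (fun z : ℂ => z ^ a) (a * (x : ℂ) ^ (a - 1) * 1) (x : ℂ) :=
    (hasDerivAt_id (x : ℂ)).cpow_const (Or.inl (by simpa using hx))
  simpa using h.comp_ofReal

/-- remainder term -/
def gT (n : ℕ) (s : ℂ) : ℂ :=
  -(1/2) * ((1 - s) * (1 - s - 1)) * ((((n + 1 : ℕ) : ℂ) + 1) ^ (1 - s - 1 - 1) - ((n : ℂ) + 1) ^ (1 - s - 1 - 1))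
  + 3 * (1 - s) * ((((n + 1 : ℕ) : ℂ) + 1) ^ (1 - s - 1) + ((n : ℂ) + 1) ^ (1 - s - 1))
  - 6 * ((((n + 1 : ℕ) : ℂ) + 1) ^ (1 - s) - ((n : ℂ) + 1) ^ (1 - s))

def KT (s : ℂ) : ℝ := ‖1 - s‖ * ‖s‖ * ‖s + 1‖ * ‖s + 2‖

def uT (n : ℕ) : ℝ := 1 / ((n : ℝ) + 1) ^ 2 - 1 / (((n + 1 : ℕ) : ℝ) + 1) ^ 2

lemma uT_hasSum : HasSum uT 1 := by
  rw [hasSum_iff_tendsto_nat_of_nonneg]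
  · have : ∀ n, ∑ i ∈ Finset.range n, uT i = 1 - 1 / ((n : ℝ) + 1) ^ 2 := by
      intro n
      have := Finset.sum_range_sub' (fun n : ℕ => 1 / ((n : ℝ) + 1) ^ 2) n
      simpa [uT] using this
    simp_rw [this]
    have h : Tendsto (fun n : ℕ => (1 / ((n : ℝ) + 1)) ^ 2) atTop (nhds (0 ^ 2)) :=
      (tendsto_one_div_add_atTop_nhds_zero_nat).pow 2
    have h2 := h.const_sub (1 : ℝ)
    simpa using h2
  · intro i
    unfold uT
    rw [sub_nonneg]
    apply one_div_le_one_div_of_le (by positivity)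
    gcongr
    simp

lemma b3_bound {u : ℝ} (h0 : 0 ≤ u) (h1 : u ≤ 1) : |u ^ 3 - 3/2 * u ^ 2 + 1/2 * u| ≤ 1/20 := by
  have : (u ^ 3 - 3/2 * u ^ 2 + 1/2 * u) ^ 2 ≤ (1/20) ^ 2 := by
    have hw0 : 0 ≤ (u - 1/2)^2 := sq_nonneg _
    have hw1 : (u - 1/2)^2 ≤ 1/4 := by nlinarith
    have e : (u ^ 3 - 3/2 * u ^ 2 + 1/2 * u) ^ 2 = (u-1/2)^2 * ((u-1/2)^2 - 1/4)^2 := by ring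
    rw [e]
    generalize (u-1/2)^2 = w at *
    nlinarith [mul_nonneg (sub_nonneg.2 hw1) (sq_nonneg (w - 1/12)), sq_nonneg (w - 1/12), mul_nonneg hw0 (sq_nonneg (w - 1/12))]
  exact abs_le_of_sq_le_sq this (by norm_num)

lemma gT_bound (n : ℕ) {s : ℂ} (hs : 0 ≤ s.re) : ‖gT n s‖ ≤ KT s / 40 * uT n := by
  set c : ℂ := 1 - s with hc
  set m : ℝ := (n : ℝ) + 1 with hm
  have hm1 : 1 ≤ m := by rw [hm]; linarith [n.cast_nonneg (α := ℝ)]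
  let G : ℝ → ℂ := fun x =>
    ((((x - m) ^ 3 - 3/2 * (x - m) ^ 2 + 1/2 * (x - m) : ℝ)) : ℂ) * (c * (c - 1) * (c - 1 - 1) * (x : ℂ) ^ (c - 1 - 1 - 1))
    - 3 * (((x - m) ^ 2 - (x - m) + 1/6 : ℝ) : ℂ) * (c * (c - 1) * (x : ℂ) ^ (c - 1 - 1))
    + 6 * ((x - m - 1/2 : ℝ) : ℂ) * (c * (x : ℂ) ^ (c - 1)) - 6 * (x : ℂ) ^ c
  let G' : ℝ → ℂ := fun x =>
    ((((x - m) ^ 3 - 3/2 * (x - m) ^ 2 + 1/2 * (x - m) : ℝ)) : ℂ) * (c * (c - 1) * (c - 1 - 1) * ((c - 1 - 1 - 1) * (x : ℂ) ^ (c - 1 - 1 - 1 - 1)))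
  have hG : ∀ x : ℝ, 0 < x → HasDerivAt G (G' x) x := by
    intro x hx
    have hid : HasDerivAt (fun x : ℝ => x - m) 1 x := (hasDerivAt_id x).sub_const m
    have d3 : HasDerivAt (fun x : ℝ => (x - m) ^ 3 - 3/2 * (x - m) ^ 2 + 1/2 * (x - m)) (3 * (x - m) ^ 2 - 3 * (x - m) + 1/2) x := by
      refine (((hid.pow 3).sub ((hid.pow 2).const_mul (3/2))).add (hid.const_mul (1/2))).congr_deriv ?_
      norm_num; ring
    have d2 : HasDerivAt (fun x : ℝ => (x - m) ^ 2 - (x - m) + 1/6) (2 * (x - m) - 1) x := by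
      refine (((hid.pow 2).sub hid).add_const (1/6)).congr_deriv ?_
      norm_num
    have d1 : HasDerivAt (fun x : ℝ => x - m - 1/2) 1 x := hid.sub_const (1/2)
    have e3 := (aux_hd (c - 1 - 1 - 1) hx).const_mul (c * (c - 1) * (c - 1 - 1))
    have e2 := (aux_hd (c - 1 - 1) hx).const_mul (c * (c - 1))
    have e1 := (aux_hd (c - 1) hx).const_mul c
    have e0 := (aux_hd c hx).const_mul 6
    have := (((d3.ofReal_comp.mul e3).sub ((d2.ofReal_comp.const_mul 3).mul e2)).add
      ((d1.ofReal_comp.const_mul 6).mul e1)).sub e0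
    refine this.congr_deriv ?_
    simp only [G']
    push_cast
    ring
  have hGb : ∀ x : ℝ, m ≤ x → x ≤ m + 1 → ‖G' x‖ ≤ KT s / 20 * (1 / x ^ 3) := by
    intro x hx1 hx2
    have hx : 0 < x := by linarith
    simp only [G', norm_mul, Complex.norm_real, Real.norm_eq_abs]
    have h1 : ‖(x : ℂ) ^ (c - 1 - 1 - 1 - 1)‖ ≤ 1 / x ^ 3 := by
      rw [Complex.norm_cpow_eq_rpow_re_of_pos hx]
      have : 1 / x ^ 3 = x ^ (-3 : ℝ) := by
        rw [Real.rpow_neg hx.le, one_div]; norm_cast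
      rw [this]
      apply Real.rpow_le_rpow_of_exponent_le (by linarith)
      simp [hc]; linarith
    have h2 := b3_bound (u := x - m) (by linarith) (by linarith)
    have n1 : ‖c - 1‖ = ‖s‖ := by rw [hc, ← norm_neg s]; congr 1; ring
    have n2 : ‖c - 1 - 1‖ = ‖s + 1‖ := by rw [hc, ← norm_neg (s+1)]; congr 1; ring
    have n3 : ‖c - 1 - 1 - 1‖ = ‖s + 2‖ := by rw [hc, ← norm_neg (s+2)]; congr 1; ring
    rw [n1, n2, n3]
    calc _ ≤ 1/20 * (‖c‖ * ‖s‖ * ‖s + 1‖ * (‖s + 2‖ * (1 / x ^ 3))) := by gcongr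
      _ = _ := by rw [KT]; ring
  let B : ℝ → ℝ := fun x => KT s / 40 * (1 / m ^ 2 - 1 / x ^ 2)
  have hB : ∀ x ∈ Set.Ico m (m+1), HasDerivWithinAt B (KT s / 20 * (1 / x ^ 3)) (Set.Ici x) x := by
    intro x hx
    have hx0 : x ≠ 0 := by have := hx.1; linarith
    have h1 : HasDerivAt (fun x : ℝ => 1 / x ^ 2) (-2 / x ^ 3) x := by
      have := ((hasDerivAt_id x).pow 2).inv (by simpa using hx0)
      simp only [one_div]
      refine this.congr_deriv ?_
      simp; field_simp
    have := ((h1.const_sub (1 / m ^ 2)).const_mul (KT s / 40))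
    refine (this.congr_deriv ?_).hasDerivWithinAt
    ring
  have hmain : ‖G (m+1) - G m‖ ≤ B (m + 1) := by
    refine image_norm_le_of_norm_deriv_right_le_deriv_boundary' (f := fun x => G x - G m) (f' := G') (B := B)
      (B' := fun x => KT s / 20 * (1 / x ^ 3)) (a := m) (b := m+1)
      ?_ ?_ ?_ ?_ hB ?_ ⟨by linarith, le_rfl⟩
    · intro x hx
      exact ((hG x (by linarith [hx.1])).continuousAt.continuousWithinAt).sub continuousWithinAt_const
    · intro x hx
      exact ((hG x (by linarith [hx.1])).sub_const _).hasDerivWithinAt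
    · simp [B]
    · apply ContinuousOn.mul continuousOn_const
      apply ContinuousOn.sub continuousOn_const
      apply ContinuousOn.div continuousOn_const (by fun_prop)
      intro x hx
      have : x ≠ 0 := by linarith [hx.1]
      positivity
    · intro x hx
      exact hGb x hx.1 hx.2.le
  have e1 : gT n s = G (m+1) - G m := by
    simp only [gT, G, hm, hc]
    push_cast
    ring
  rw [e1]
  convert hmain using 1
  simp [B, uT, hm]

lemma gT_diff (n : ℕ) : Differentiable ℂ (gT n) := by
  have h1 : ((n : ℂ) + 1) ≠ 0 := by exact_mod_cast Nat.succ_ne_zero n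
  have h2 : (((n + 1 : ℕ) : ℂ) + 1) ≠ 0 := by exact_mod_cast Nat.succ_ne_zero (n+1)
  unfold gT
  intro s
  have q : ∀ (b : ℂ), b ≠ 0 → ∀ d : ℂ → ℂ, Differentiable ℂ d → DifferentiableAt ℂ (fun s => b ^ (d s)) s :=
    fun b hb d hd => (hd s).const_cpow (Or.inl hb)
  have a1 := q _ h1 (fun s => 1 - s) (by fun_prop)
  have a2 := q _ h1 (fun s => 1 - s - 1) (by fun_prop)
  have a3 := q _ h1 (fun s => 1 - s - 1 - 1) (by fun_prop)
  have b1 := q _ h2 (fun s => 1 - s) (by fun_prop)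
  have b2 := q _ h2 (fun s => 1 - s - 1) (by fun_prop)
  have b3 := q _ h2 (fun s => 1 - s - 1 - 1) (by fun_prop)
  fun_prop

lemma gT_tsum {s : ℂ} (hs : 2 < s.re) :
    ∑' n, gT n s = 1/2 * (s + 2) * (s + 3) - 6 * (s - 1) * riemannZeta s := by
  have hp : ∀ a : ℂ, a.re < -1 → Summable (fun n : ℕ => ((n : ℂ) + 1) ^ a) := by
    intro a ha
    have := (Complex.summable_one_div_nat_cpow (p := -a)).2 (by simp; linarith)
    have := (summable_nat_add_iff 1).2 this
    refine this.congr fun n => ?_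
    rw [Complex.cpow_neg]; simp
  have hz : riemannZeta s = ∑' n : ℕ, ((n : ℂ) + 1) ^ (1 - s - 1) := by
    rw [zeta_eq_tsum_one_div_nat_add_one_cpow (by linarith)]
    congr 1; ext n
    rw [show (1 - s - 1) = -s by ring, Complex.cpow_neg, one_div]
  have sh : ∀ a : ℂ, a.re < -1 → HasSum (fun n : ℕ => (((n + 1 : ℕ) : ℂ) + 1) ^ a) (∑' n : ℕ, ((n : ℂ) + 1) ^ a - 1) := by
    intro a ha
    have := (hasSum_nat_add_iff' 1).2 (hp a ha).hasSum
    simpa using this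
  have r0 : (1 - s).re < -1 := by simp; linarith
  have r1 : (1 - s - 1).re < -1 := by simp; linarith
  have r2 : (1 - s - 1 - 1).re < -1 := by simp; linarith
  have H := (((((sh _ r2).sub (hp _ r2).hasSum).mul_left (-(1/2) * ((1 - s) * (1 - s - 1)))).add
    (((sh _ r1).add (hp _ r1).hasSum).mul_left (3 * (1 - s)))).sub
    (((sh _ r0).sub (hp _ r0).hasSum).mul_left 6))
  have := H.tsum_eq
  simp only [gT]
  rw [this, hz]
  ring

lemma zeta_id {s : ℂ} (hs : 0 < s.re) (hi : s.im ≠ 0) :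
    ∑' n, gT n s = 1/2 * (s + 2) * (s + 3) - 6 * (s - 1) * riemannZeta s := by
  obtain ⟨e, he, hes⟩ : ∃ e : ℝ, |e| = 1 ∧ 0 < e * s.im := by
    rcases lt_or_gt_of_ne hi with h | h
    · exact ⟨-1, by simp, by linarith⟩
    · exact ⟨1, by simp, by linarith⟩
  have hee : e * e = 1 := by rw [← abs_mul_abs_self, he]; norm_num
  set R : ℝ := ‖s‖ + 5 with hR
  let U : Set ℂ := Metric.ball 0 R ∩ ({z : ℂ | 0 < z.re} ∩ {z : ℂ | 0 < e * z.im})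
  have hUo : IsOpen U := by
    refine Metric.isOpen_ball.inter ((isOpen_lt continuous_const Complex.continuous_re).inter
      (isOpen_lt continuous_const (by fun_prop)))
  have hUc : Convex ℝ U := by
    refine (convex_ball _ _).inter ((convex_halfSpace_re_gt 0).inter ?_)
    intro x hx y hy a b ha hb hab
    simp only [Set.mem_ofPred_eq, Complex.add_im, Complex.smul_im, smul_eq_mul] at *
    have : e * (a * x.im + b * y.im) = a * (e * x.im) + b * (e * y.im) := by ring
    rw [this]
    rcases ha.eq_or_lt with h | h
    · have : b = 1 := by linarith
      rw [← h, this]; simpa using hy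
    · have := mul_pos h hx
      have := mul_nonneg hb hy.le
      linarith
  have hsU : s ∈ U := ⟨by simp [hR], hs, hes⟩
  let w : ℂ := ⟨3, e⟩
  have hw : w ∈ U := by
    refine ⟨?_, by simp [w], by simp [w, hee]⟩
    rw [mem_ball_zero_iff]
    calc ‖w‖ ≤ |w.re| + |w.im| := Complex.norm_le_abs_re_add_abs_im w
      _ = 3 + 1 := by simp [w, he]
      _ < R := by rw [hR]; linarith [norm_nonneg s]
  have d1 : DifferentiableOn ℂ (fun s => ∑' n, gT n s) U := by
    refine Complex.differentiableOn_tsum_of_summable_norm (u := fun n => ((1 + R) * R * (R + 1) * (R + 2)) / 40 * uT n)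
      (uT_hasSum.summable.mul_left _) (fun i => (gT_diff i).differentiableOn) hUo ?_
    intro n z hz
    refine (gT_bound n (le_of_lt hz.2.1)).trans ?_
    have hzR : ‖z‖ ≤ R := by simpa using (mem_ball_zero_iff.1 hz.1).le
    have hu : 0 ≤ uT n := by
      unfold uT
      rw [sub_nonneg]
      apply one_div_le_one_div_of_le (by positivity)
      gcongr
      simp
    have h1 : ‖1 - z‖ ≤ 1 + R := (norm_sub_le _ _).trans (by simpa using hzR)
    have h2 : ‖z + 1‖ ≤ R + 1 := (norm_add_le _ _).trans (by simpa using hzR)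
    have h3 : ‖z + 2‖ ≤ R + 2 := (norm_add_le _ _).trans (by simpa using hzR)
    unfold KT
    gcongr
  have d2 : DifferentiableOn ℂ (fun s => 1/2 * (s + 2) * (s + 3) - 6 * (s - 1) * riemannZeta s) U := by
    intro z hz
    have : z ≠ 1 := by
      rintro rfl
      have := hz.2.2
      simp at this
    have := differentiableAt_riemannZeta this
    apply DifferentiableAt.differentiableWithinAt
    fun_prop
  refine (d1.analyticOnNhd hUo).eqOn_of_preconnected_of_eventuallyEq (d2.analyticOnNhd hUo) hUc.isPreconnected hw ?_ hsU
  have : {z : ℂ | 2 < z.re} ∈ nhds w :=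
    (isOpen_lt continuous_const Complex.continuous_re).mem_nhds (by simp [w]; norm_num)
  filter_upwards [this] with z hz
  exact gT_tsum hz

lemma zeta_ne_half {s : ℂ} (h0 : 1/2 ≤ s.re) (h1 : s.re ≤ 1) (hi : s.im ≠ 0) (hi2 : |s.im| ≤ 4.4) :
    riemannZeta s ≠ 0 := by
  intro hz
  have hid := zeta_id (by linarith) hi
  have hb : ‖∑' n, gT n s‖ ≤ KT s / 40 * 1 :=
    tsum_of_norm_bounded (uT_hasSum.mul_left (KT s / 40)) (fun n => gT_bound n (by linarith))
  rw [hid, hz] at hb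
  have him : s.im ^ 2 ≤ 4.4 ^ 2 := sq_le_sq' (by linarith [abs_le.1 hi2]) (abs_le.1 hi2).2
  have ha : ‖1 - s‖ ^ 2 ≤ 19.61 := by
    rw [← Complex.normSq_eq_norm_sq, Complex.normSq_apply]; simp; nlinarith
  have hc : ‖s‖ ^ 2 ≤ 20.36 := by
    rw [← Complex.normSq_eq_norm_sq, Complex.normSq_apply]; nlinarith
  have hp : ‖1 - s‖ * ‖s‖ < 20 := by
    apply lt_of_pow_lt_pow_left₀ 2 (by norm_num)
    rw [mul_pow]
    calc _ ≤ (19.61 : ℝ) * 20.36 := by gcongr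
      _ < _ := by norm_num
  have hd : ‖s + 1‖ ≤ ‖s + 3‖ := by
    apply (sq_le_sq₀ (norm_nonneg _) (norm_nonneg _)).1
    rw [← Complex.normSq_eq_norm_sq, Complex.normSq_apply, ← Complex.normSq_eq_norm_sq, Complex.normSq_apply]
    simp; nlinarith
  have h1p : 0 < ‖s + 1‖ := by
    rw [norm_pos_iff]; intro h; have := congrArg Complex.im h; simp at this; exact hi this
  have h2p : 0 < ‖s + 2‖ := by
    rw [norm_pos_iff]; intro h; have := congrArg Complex.im h; simp at this; exact hi this
  simp only [mul_zero, sub_zero, norm_mul, mul_one] at hb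
  norm_num at hb
  unfold KT at hb
  have k1 : ‖1 - s‖ * ‖s‖ * (‖s + 1‖ * ‖s + 2‖) < 20 * (‖s + 1‖ * ‖s + 2‖) := by gcongr
  have k2 : ‖s + 1‖ * ‖s + 2‖ ≤ ‖s + 3‖ * ‖s + 2‖ := by gcongr
  nlinarith

lemma zeta_low {s : ℂ} (hz : riemannZeta s = 0) (h0 : 0 < s.re) (h1 : s.re < 1) (hi : 0 < s.im) :
    4.4 < s.im := by
  by_contra hcon
  push Not at hcon
  rcases le_total (1/2) s.re with h | h
  · exact zeta_ne_half h h1.le hi.ne' (by rwa [abs_of_pos hi]) hz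
  · refine zeta_ne_half (s := 1 - s) (by simp; linarith) (by simp; linarith) (by simp; exact hi.ne')
      (by simp; rwa [abs_of_pos hi]) ?_
    rw [riemannZeta_one_sub, hz, mul_zero]
    · rintro n rfl; simp at hi
    · rintro rfl; simp at hi

lemma ntZeros_finite (T : ℝ) : (ntZeros T).Finite := by
  by_contra hinf
  have hinf : (ntZeros T).Infinite := hinf
  have hK : IsCompact (Set.Icc (0:ℝ) 1 ×ℂ Set.Icc (1:ℝ) T) := isCompact_Icc.reProdIm isCompact_Icc
  obtain ⟨z, hzK, hz⟩ := hinf.exists_accPt_of_subset_isCompact hK (by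
    rintro ρ ⟨h1, h2, h3, h4, h5⟩
    have := zeta_low h1 h2 h3 h4
    rw [Complex.mem_reProdIm]
    exact ⟨⟨h2.le, h3.le⟩, ⟨by linarith, h5⟩⟩)
  rw [accPt_iff_frequently_nhdsNE] at hz
  let U : Set ℂ := {z : ℂ | 0 < z.im}
  have hUo : IsOpen U := isOpen_lt continuous_const Complex.continuous_im
  have hd : DifferentiableOn ℂ riemannZeta U := by
    intro z hz
    refine (differentiableAt_riemannZeta ?_).differentiableWithinAt
    rintro rfl
    simp [U] at hz
  have hzU : z ∈ U := by
    have := (Complex.mem_reProdIm.1 hzK).2.1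
    show 0 < z.im
    linarith
  have := (hd.analyticOnNhd hUo).eqOn_zero_of_preconnected_of_frequently_eq_zero
    (convex_halfSpace_im_gt 0).isPreconnected hzU (hz.mono fun w hw => hw.1)
  have h2 : (⟨2, 1⟩ : ℂ) ∈ U := by simp [U]
  exact riemannZeta_ne_zero_of_one_lt_re (s := ⟨2, 1⟩) (by norm_num) (this h2)

def zF (T : ℝ) : Finset ℂ := (ntZeros_finite T).toFinset

lemma mem_zF {T : ℝ} {ρ : ℂ} : ρ ∈ zF T ↔ ρ ∈ ntZeros T := by simp [zF]

lemma zetaN_eq (T : ℝ) : zetaN T = ∑ ρ ∈ zF T, zetaMult ρ :=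
  finsum_mem_eq_finite_toFinset_sum _ (ntZeros_finite T)

lemma count_le (T t t' : ℝ) (htt : t ≤ t') :
    ∑ ρ ∈ (zF T).filter (fun ρ => t < ρ.im ∧ ρ.im ≤ t'), zetaMult ρ ≤ zetaN t' - zetaN t := by
  apply Nat.le_sub_of_add_le
  rw [zetaN_eq, zetaN_eq, ← Finset.sum_union]
  · apply Finset.sum_le_sum_of_subset
    intro ρ hρ
    rw [Finset.mem_union, Finset.mem_filter, mem_zF, mem_zF] at hρ
    rw [mem_zF]
    rcases hρ with ⟨⟨h1, h2, h3, h4, h5⟩, h6, h7⟩ | ⟨h1, h2, h3, h4, h5⟩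
    · exact ⟨h1, h2, h3, h4, h7⟩
    · exact ⟨h1, h2, h3, h4, h5.trans htt⟩
  · rw [Finset.disjoint_left]
    intro ρ h1 h2
    rw [Finset.mem_filter] at h1
    rw [mem_zF] at h2
    exact absurd h2.2.2.2.2 (not_le.2 h1.2.1)

lemma zetaN_mono : Monotone zetaN := by
  intro a b hab
  rw [zetaN_eq, zetaN_eq]
  apply Finset.sum_le_sum_of_subset
  intro ρ hρ
  rw [mem_zF] at *
  obtain ⟨h1, h2, h3, h4, h5⟩ := hρ
  exact ⟨h1, h2, h3, h4, h5.trans hab⟩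

lemma main_aux (T : ℝ) (k : ℕ) (h : ℝ) (hh : 0 < h) (hT : 0 ≤ T) (hlow : ∀ ρ ∈ zF T, h ≤ ρ.im) :
    h * (∑ ρ ∈ zF T, (zetaMult ρ : ℝ) * ((zetaN (ρ.im + k * h) - zetaN ρ.im : ℕ) : ℝ) ^ (2 * k)) ≤
      ∫ t in (0:ℝ)..T, ((zetaN (t + (k + 1) * h) - zetaN t : ℕ) : ℝ) ^ (2 * k + 1) := by
  rw [intervalIntegral.integral_of_le hT]
  set c : ℂ → ℝ := fun ρ => (zetaMult ρ : ℝ) * ((zetaN (ρ.im + k * h) - zetaN ρ.im : ℕ) : ℝ) ^ (2 * k) with hc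
  have e1 : h * ∑ ρ ∈ zF T, c ρ = ∫ t in Set.Ioc 0 T, ∑ ρ ∈ zF T, (Set.Ioo (ρ.im - h) ρ.im).indicator (fun _ => c ρ) t := by
    rw [integral_finsetSum, Finset.mul_sum]
    · apply Finset.sum_congr rfl
      intro ρ hρ
      rw [setIntegral_indicator measurableSet_Ioo, Set.inter_eq_right.2, setIntegral_const]
      · simp [hh.le]
      · have h1 := hlow ρ hρ
        have h2 := (mem_zF.1 hρ).2.2.2.2
        intro x hx
        exact ⟨by linarith [hx.1], by linarith [hx.2]⟩
    · intro ρ hρ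
      exact (integrable_const (c ρ)).indicator measurableSet_Ioo
  rw [e1]
  have hmeas : Measurable (fun t : ℝ => ((zetaN (t + (k + 1) * h) - zetaN t : ℕ) : ℝ) ^ (2 * k + 1)) := by
    have m1 : Measurable (fun t : ℝ => zetaN (t + (k + 1) * h)) :=
      zetaN_mono.measurable.comp (measurable_id.add_const _)
    have m2 := zetaN_mono.measurable
    have m3 : Measurable (fun t : ℝ => (zetaN (t + (k + 1) * h) - zetaN t : ℕ)) := m1.sub m2
    exact (measurable_from_top.comp m3).pow_const _
  apply setIntegral_mono_on _ _ measurableSet_Ioc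
  · intro t ht
    have hk : h ≤ (k + 1) * h := by nlinarith [k.cast_nonneg (α := ℝ)]
    set n : ℕ := zetaN (t + (k + 1) * h) - zetaN t with hn
    have s1 : ∀ ρ ∈ zF T, (Set.Ioo (ρ.im - h) ρ.im).indicator (fun _ => c ρ) t ≤
        (if t < ρ.im ∧ ρ.im ≤ t + h then (zetaMult ρ : ℝ) else 0) * (n : ℝ) ^ (2 * k) := by
      intro ρ hρ
      by_cases hin : t ∈ Set.Ioo (ρ.im - h) ρ.im
      · rw [Set.indicator_of_mem hin, if_pos ⟨hin.2, by linarith [hin.1]⟩]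
        have hle : zetaN (ρ.im + k * h) - zetaN ρ.im ≤ n := by
          apply tsub_le_tsub
          · apply zetaN_mono; linarith [hin.1]
          · exact zetaN_mono hin.2.le
        simp only [hc]
        gcongr
      · rw [Set.indicator_of_notMem hin]
        split_ifs <;> positivity
    calc _ ≤ ∑ ρ ∈ zF T, (if t < ρ.im ∧ ρ.im ≤ t + h then (zetaMult ρ : ℝ) else 0) * (n : ℝ) ^ (2 * k) :=
          Finset.sum_le_sum s1
      _ = ((∑ ρ ∈ (zF T).filter (fun ρ => t < ρ.im ∧ ρ.im ≤ t + h), zetaMult ρ : ℕ) : ℝ) * (n : ℝ) ^ (2 * k) := by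
          rw [← Finset.sum_mul, ← Finset.sum_filter]; push_cast; rfl
      _ ≤ (n : ℝ) * (n : ℝ) ^ (2 * k) := by
          gcongr
          refine (count_le T t (t + h) (by linarith)).trans ?_
          apply tsub_le_tsub_right
          apply zetaN_mono; linarith
      _ = _ := by ring
  · apply integrable_finsetSum
    intro ρ hρ
    exact (integrable_const (c ρ)).indicator measurableSet_Ioo
  · refine Measure.integrableOn_of_bounded (M := (zetaN (T + (k + 1) * h) : ℝ) ^ (2 * k + 1)) (by simp) hmeas.aestronglyMeasurable ?_
    filter_upwards [ae_restrict_mem measurableSet_Ioc] with t ht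
    rw [Real.norm_of_nonneg (by positivity)]
    gcongr
    exact (Nat.sub_le _ _).trans (zetaN_mono (by linarith [ht.2]))

/-- (Unconditional.) For every real `T ≥ 2` and every positive integer `k`,
`Σ_{0<γ≤T} n(γ,k)^{2k} ≤ (log T)/(2π) ∫₀^T n(t,k+1)^{2k+1} dt`, where the sum runs over
ordinates of nontrivial zeros of `ζ` in `(0,T]` counted with multiplicity. -/
theorem sum_nshort_le_integral :
    ∀ T : ℝ, 2 ≤ T → ∀ k : ℕ, 1 ≤ k →
      (∑ᶠ ρ ∈ ntZeros T, (zetaMult ρ : ℝ) * (nShort T ρ.im k : ℝ) ^ (2 * k)) ≤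
        Real.log T / (2 * π) * ∫ t in (0:ℝ)..T, (nShort T t (k + 1) : ℝ) ^ (2 * k + 1) := by
  intro T hT k hk
  have hlog : 0 < Real.log T := Real.log_pos (by linarith)
  set h : ℝ := 2 * π / Real.log T with hh
  have hpos : 0 < h := by positivity
  have hlow : ∀ ρ ∈ zF T, h ≤ ρ.im := by
    intro ρ hρ
    obtain ⟨h1, h2, h3, h4, h5⟩ := mem_zF.1 hρ
    have h6 := zeta_low h1 h2 h3 h4
    have l1 : Real.log 4.4 ≤ Real.log T := Real.log_le_log (by norm_num) (by linarith)
    have l2 : Real.log 4.4 = 2 * Real.log 2 + Real.log 1.1 := by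
      rw [show (4.4 : ℝ) = 2 ^ 2 * 1.1 by norm_num, Real.log_mul (by norm_num) (by norm_num), Real.log_pow]
      norm_num
    have l3 := Real.one_sub_inv_le_log_of_pos (show (0:ℝ) < 1.1 by norm_num)
    norm_num at l3
    have l4 := Real.log_two_gt_d9
    have l5 := Real.pi_lt_d2
    rw [hh, div_le_iff₀ hlog]
    nlinarith
  have main := main_aux T k h hpos (by linarith) hlow
  rw [finsum_mem_eq_finite_toFinset_sum _ (ntZeros_finite T)]
  have c1 : ∀ x : ℝ, 2 * π * x / Real.log T = x * h := by intro x; rw [hh]; ring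
  simp only [nShort, c1]
  have c2 : Real.log T / (2 * π) = h⁻¹ := by rw [hh, inv_div]
  rw [c2, le_inv_mul_iff₀ hpos]
  exact main
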